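/- Let H be a finitely generated subgroup of a free group F = FreeGroup A and let K be any subgroup of F with H ≤ K. Then there exists a unique subgroup H' of F such that H ≤alg H' and H' is a free factor of K (H' is the K-algebraic closure of H; Takahasi's theorem). -/

import Mathlib

/-- `H` is a free factor of `K`: `H ≤ K` and `K` is the internal free product of `H`
and some subgroup `L ≤ K`, i.e. the canonical homomorphism `H ∗ L →* K` induced by
the inclusions is bijective. -/
def IsFreeFactor {G : Type*} [Group G] (H K : Subgroup G) : Prop :=
  ∃ (hHK : H ≤ K) (L : Subgroup G) (hLK : L ≤ K),
    Function.Bijective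
      ⇑(Monoid.Coprod.lift (Subgroup.inclusion hHK) (Subgroup.inclusion hLK))

/-- `H ≤alg K`: the extension `H ≤ K` is algebraic, i.e. `H` is contained in no
proper free factor of `K`. -/
def IsAlgebraicExtension {G : Type*} [Group G] (H K : Subgroup G) : Prop :=
  H ≤ K ∧ ∀ L : Subgroup G, H ≤ L → IsFreeFactor L K → L = K

/-!
Uniqueness rests on a weak form of the Kurosh subgroup theorem, valid in every group: if `H` is a
free factor of `K` and `B ≤ K`, then `H ⊓ B` is a free factor of `B`. Indeed, let `K = M ∗ N` with
`M = H` act on the cosets of `B`. Choose a Schreier transversal which on the `M`-orbit of the base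
coset takes values in `M`. The loops of the `M`-edges inside that orbit lie in `M ⊓ B`, and the
loops of all other edges generate a complement `C`. Recording each loop in its factor defines a
cocycle on `M ∗ N`, whose restriction to `B` is the inverse of the canonical map
`(M ⊓ B) ∗ C → B`. Hence an algebraic extension of `H` inside `K` is contained in every free factor
of `K` that contains `H`.

For existence, `H` lies in a finitely generated free factor of `K`, generated by part of a basis.
One of least rank is algebraic over `H`, since a proper free factor has smaller rank.
-/

open Monoid Coprod Function
open scoped Pointwise

section FreeFactor

variable {G G' P Q : Type*} [Group G] [Group G'] [Group P] [Group Q] {H K M : Subgroup G}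

theorem range_lift_subtype (H L : Subgroup G) : (lift H.subtype L.subtype).range = H ⊔ L := by
  rw [range_lift, Subgroup.range_subtype, Subgroup.range_subtype]

theorem isFreeFactor_iff_exists_injective_lift_subtype :
    IsFreeFactor H K ↔
      ∃ L : Subgroup G, Injective (lift H.subtype L.subtype) ∧ H ⊔ L = K := by
  have subtype_comp_lift {L : Subgroup G} (hHK : H ≤ K) (hLK : L ≤ K) :
      K.subtype.comp (lift (Subgroup.inclusion hHK) (Subgroup.inclusion hLK)) =
        lift H.subtype L.subtype := by
    rw [comp_lift, Subgroup.subtype_comp_inclusion, Subgroup.subtype_comp_inclusion]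
  have surjective_iff {L : Subgroup G} (hHK : H ≤ K) (hLK : L ≤ K) :
      Surjective (lift (Subgroup.inclusion hHK) (Subgroup.inclusion hLK)) ↔ H ⊔ L = K := by
    rw [← MonoidHom.range_eq_top, ← (Subgroup.map_injective K.subtype_injective).eq_iff,
      ← MonoidHom.range_comp, subtype_comp_lift, range_lift_subtype, ← MonoidHom.range_eq_map,
      Subgroup.range_subtype]
  constructor
  · rintro ⟨hHK, L, hLK, hinj, hsurj⟩
    refine ⟨L, ?_, (surjective_iff hHK hLK).1 hsurj⟩
    rw [← subtype_comp_lift hHK hLK]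
    exact K.subtype_injective.comp hinj
  · rintro ⟨L, hinj, hsup⟩
    have hHK : H ≤ K := hsup ▸ le_sup_left
    have hLK : L ≤ K := hsup ▸ le_sup_right
    refine ⟨hHK, L, hLK, ?_, (surjective_iff hHK hLK).2 hsup⟩
    rw [← subtype_comp_lift hHK hLK] at hinj
    exact Injective.of_comp (f := K.subtype) hinj

theorem isFreeFactor_range_of_injective_lift {f : P →* G} {g : Q →* G}
    (h : Injective (lift f g)) : IsFreeFactor f.range (f.range ⊔ g.range) := by
  have hf : Injective f := h.comp inl_injective
  have hg : Injective g := h.comp inr_injective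
  let e := MulEquiv.coprodCongr (MonoidHom.ofInjective hf) (MonoidHom.ofInjective hg)
  have lift_comp_e : (lift f.range.subtype g.range.subtype).comp e.toMonoidHom = lift f g :=
    hom_ext rfl rfl
  refine isFreeFactor_iff_exists_injective_lift_subtype.2 ⟨g.range, ?_, rfl⟩
  rw [← lift_comp_e] at h
  exact (e.injective_comp _).1 h

/-- The internal free product of `H` and `L`, as the subgroup they generate. -/
noncomputable def coprodEquivSup {L : Subgroup G} (h : Injective (lift H.subtype L.subtype)) :
    H ∗ L ≃* ↥(H ⊔ L) :=
  (MonoidHom.ofInjective h).trans (MulEquiv.subgroupCongr (range_lift_subtype H L))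

theorem isFreeFactor_sup_of_retraction {L : Subgroup G} (r : ↥(H ⊔ L) →* H ∗ L)
    (hr_left : r.comp (Subgroup.inclusion le_sup_left) = inl)
    (hr_right : r.comp (Subgroup.inclusion le_sup_right) = inr) :
    IsFreeFactor H (H ⊔ L) := by
  refine isFreeFactor_iff_exists_injective_lift_subtype.2 ⟨L, ?_, rfl⟩
  let ι : H ∗ L →* ↥(H ⊔ L) :=
    lift (Subgroup.inclusion le_sup_left) (Subgroup.inclusion le_sup_right)
  have r_comp_ι : r.comp ι = .id _ := hom_ext hr_left hr_right
  have subtype_comp_ι : (H ⊔ L).subtype.comp ι = lift H.subtype L.subtype := hom_ext rfl rfl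
  rw [← subtype_comp_ι]
  exact (H ⊔ L).subtype_injective.comp (LeftInverse.injective (DFunLike.congr_fun r_comp_ι))

namespace IsFreeFactor

theorem le (h : IsFreeFactor H K) : H ≤ K := h.1

theorem map (h : IsFreeFactor H K) {e : G →* G'} (he : Injective e) :
    IsFreeFactor (H.map e) (K.map e) := by
  obtain ⟨L, hinj, rfl⟩ := isFreeFactor_iff_exists_injective_lift_subtype.1 h
  have := isFreeFactor_range_of_injective_lift (f := e.comp H.subtype) (g := e.comp L.subtype)
    (by rw [← comp_lift]; exact he.comp hinj)
  simpa only [MonoidHom.range_comp, Subgroup.range_subtype, ← Subgroup.map_sup] using this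

theorem trans (hHK : IsFreeFactor H K) (hKM : IsFreeFactor K M) : IsFreeFactor H M := by
  obtain ⟨L, hL, rfl⟩ := isFreeFactor_iff_exists_injective_lift_subtype.1 hHK
  obtain ⟨N, hN, rfl⟩ := isFreeFactor_iff_exists_injective_lift_subtype.1 hKM
  let e : H ∗ (L ∗ N) ≃* ↥(H ⊔ L) ∗ N :=
    (MulEquiv.coprodAssoc H L N).symm.trans (MulEquiv.coprodCongr (coprodEquivSup hL) (.refl N))
  have lift_comp_e : (lift (H ⊔ L).subtype N.subtype).comp e.toMonoidHom =
      lift H.subtype (lift L.subtype N.subtype) :=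
    hom_ext rfl (hom_ext rfl rfl)
  have := isFreeFactor_range_of_injective_lift (f := H.subtype)
    (g := lift L.subtype N.subtype) (lift_comp_e ▸ hN.comp e.injective)
  simpa only [range_lift, Subgroup.range_subtype, sup_assoc] using this

end IsFreeFactor

end FreeFactor

section Transversal

variable {G Ω : Type*} [Group G] [MulAction G Ω] {U : Set G} {S : Set Ω}

/-- The point `ω` can be reached from `S` along edges `p → u • p` with `u ∈ U` on which `t` is
multiplicative and whose endpoint lies outside `S`. When this holds for every `ω`, these edges
form a spanning forest of the Schreier graph of `U` rooted at the points of `S`, and `t` is a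
Schreier transversal relative to `S`. -/
inductive SchreierReachable (U : Set G) (S : Set Ω) (t : Ω → G) : Ω → Prop
  | base {ω : Ω} (hω : ω ∈ S) : SchreierReachable U S t ω
  | step {u : G} {p : Ω} (hu : u ∈ U) (hp : SchreierReachable U S t p) (hup : u • p ∉ S)
      (ht : t (u • p) = u * t p) : SchreierReachable U S t (u • p)

theorem exists_mem_pow_of_submonoid_closure_eq_top {M : Type*} [Monoid M] {U : Set M}
    (hU : Submonoid.closure U = ⊤) (g : M) : ∃ n : ℕ, g ∈ U ^ n := by
  have hg : g ∈ Submonoid.closure U := hU ▸ Submonoid.mem_top g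
  induction hg using Submonoid.closure_induction with
  | mem u hu => exact ⟨1, by rwa [pow_one]⟩
  | one => exact ⟨0, by rw [pow_zero]; exact Set.one_mem_one⟩
  | mul g h _ _ ihg ihh =>
    obtain ⟨m, hm⟩ := ihg
    obtain ⟨n, hn⟩ := ihh
    exact ⟨m + n, pow_add U m n ▸ Set.mul_mem_mul hm hn⟩

theorem exists_depth [MulAction.IsPretransitive G Ω] (hU : Submonoid.closure U = ⊤)
    (hS : S.Nonempty) :
    ∃ d : Ω → ℕ, ∀ ω ∉ S, ∃ u ∈ U, d (u⁻¹ • ω) < d ω := by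
  classical
  have exists_layer (ω : Ω) : ∃ n : ℕ, ω ∈ U ^ n • S := by
    obtain ⟨s, hs⟩ := hS
    obtain ⟨g, rfl⟩ := MulAction.exists_smul_eq G s ω
    obtain ⟨n, hn⟩ := exists_mem_pow_of_submonoid_closure_eq_top hU g
    exact ⟨n, Set.smul_mem_smul hn hs⟩
  refine ⟨fun ω => Nat.find (exists_layer ω), fun ω hω => ?_⟩
  have hlayer := Nat.find_spec (exists_layer ω)
  cases hn : Nat.find (exists_layer ω) with
  | zero => rw [hn, pow_zero, one_smul] at hlayer; exact absurd hlayer hω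
  | succ n =>
    rw [hn, pow_succ', mul_smul] at hlayer
    obtain ⟨u, hu, p, hp, hup⟩ := hlayer
    have hdepth : Nat.find (exists_layer (u⁻¹ • ω)) ≤ n :=
      Nat.find_min' _ (by rwa [← hup, inv_smul_smul])
    exact ⟨u, hu, hdepth.trans_lt (n.lt_succ_self.trans_eq hn.symm)⟩

theorem exists_schreierReachable [MulAction.IsPretransitive G Ω]
    (hU : Submonoid.closure U = ⊤) (hS : S.Nonempty) (t₀ : Ω → G) :
    ∃ t : Ω → G, Set.EqOn t t₀ S ∧ ∀ ω, SchreierReachable U S t ω := by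
  classical
  obtain ⟨d, hd⟩ := exists_depth hU hS
  choose! u huU hud using hd
  let t : Ω → G := (measure d).wf.fix fun ω t =>
    if hω : ω ∈ S then t₀ ω else u ω * t ((u ω)⁻¹ • ω) (hud ω hω)
  have t_eq (ω : Ω) : t ω = if ω ∈ S then t₀ ω else u ω * t ((u ω)⁻¹ • ω) :=
    (measure d).wf.fix_eq _ ω
  refine ⟨t, fun ω hω => by rw [t_eq, if_pos hω], fun ω => ?_⟩
  induction ω using (measure d).wf.induction with
  | _ ω ih =>
    by_cases hω : ω ∈ S
    · exact .base hω
    · have hstep := smul_inv_smul (u ω) ω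
      rw [← hstep]
      refine .step (huU ω hω) (ih _ (hud ω hω)) (hstep.symm ▸ hω) ?_
      rw [hstep, t_eq ω, if_neg hω]

/-- The Schreier generator attached to the edge `ω → g • ω` by the transversal `t`: the element
that goes from the base point to `ω` by `t`, along the edge, and back by `t`. -/
def schreierLoop (t : Ω → G) (g : G) (ω : Ω) : G :=
  (t (g • ω))⁻¹ * g * t ω

variable {t : Ω → G} {o : Ω}

theorem schreierLoop_eq_one {g : G} {ω : Ω} (h : t (g • ω) = g * t ω) :
    schreierLoop t g ω = 1 := by
  rw [schreierLoop, mul_assoc, h, inv_mul_cancel]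

theorem schreierLoop_of_mem_stabilizer (ho : t o = 1) {g : G}
    (hg : g ∈ MulAction.stabilizer G o) : schreierLoop t g o = g := by
  rw [schreierLoop, MulAction.mem_stabilizer_iff.1 hg, ho, inv_one, one_mul, mul_one]

theorem schreierLoop_mem_stabilizer (ht : ∀ ω, t ω • o = ω) (g : G) (ω : Ω) :
    schreierLoop t g ω ∈ MulAction.stabilizer G o := by
  rw [MulAction.mem_stabilizer_iff, schreierLoop, mul_smul, mul_smul, ht, inv_smul_eq_iff, ht]

end Transversal

section Cocycle

variable {G M T T' Ω : Type*} [Group G] [Group M] [Group T] [Group T'] [MulAction G Ω]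

/-- The function `c` is a `T`-valued cocycle for the action of `M` on `Ω` through `φ : M →* G`;
equivalently, a functor from the action groupoid to `T`. -/
def IsCocycle (φ : M →* G) (c : M → Ω → T) : Prop :=
  ∀ g h ω, c (g * h) ω = c g (φ h • ω) * c h ω

theorem isCocycle_schreierLoop (φ : M →* G) (t : Ω → G) :
    IsCocycle φ fun g => schreierLoop t (φ g) := by
  intro g h ω
  simp only [schreierLoop, map_mul, mul_smul]
  group

namespace IsCocycle

variable {φ : M →* G} {c : M → Ω → T}

theorem map_comp (hc : IsCocycle φ c) (f : T →* T') : IsCocycle φ fun g ω => f (c g ω) :=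
  fun g h ω => by simp only [hc g h ω, map_mul]

theorem apply_one (hc : IsCocycle φ c) (ω : Ω) : c 1 ω = 1 := by
  simpa using hc 1 1 ω

theorem apply_inv_smul (hc : IsCocycle φ c) (g : M) (ω : Ω) : c g⁻¹ (φ g • ω) = (c g ω)⁻¹ := by
  rw [eq_inv_iff_mul_eq_one, ← hc, inv_mul_cancel, hc.apply_one]

/-- A cocycle, viewed as a homomorphism to the wreath product `T ≀ G` lifting `φ`. -/
def toSemidirectProduct (hc : IsCocycle φ c) : M →* (Ω → T) ⋊[mulAutArrow] G where
  toFun g := ⟨fun ω => c g ((φ g)⁻¹ • ω), φ g⟩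
  map_one' := SemidirectProduct.ext (funext fun ω => hc.apply_one _) φ.map_one
  map_mul' g h := by
    refine SemidirectProduct.ext (funext fun ω => ?_) (φ.map_mul g h)
    simp only [hc g h, map_mul, mul_inv_rev, mul_smul, smul_inv_smul]
    rfl

/-- A cocycle restricts to a homomorphism on the stabilizer of each point. -/
def stabilizerHom {c : G → Ω → T} (hc : IsCocycle (.id G) c) (o : Ω) :
    MulAction.stabilizer G o →* T where
  toFun g := c g o
  map_one' := hc.apply_one o
  map_mul' g h := by
    rw [Subgroup.coe_mul, hc, MonoidHom.id_apply, MulAction.mem_stabilizer_iff.1 h.2]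

theorem apply_schreierLoop {c : G → Ω → T} (hc : IsCocycle (.id G) c) {t : Ω → G} {o : Ω}
    (ht : ∀ ω, t ω • o = ω) (hct : ∀ ω, c (t ω) o = 1) (g : G) (ω : Ω) :
    c (schreierLoop t g ω) o = c g ω := by
  have hinv : c (t (g • ω))⁻¹ (g • ω) = 1 := by
    simpa only [MonoidHom.id_apply, ht, hct, inv_one] using hc.apply_inv_smul (t (g • ω)) o
  rw [schreierLoop, mul_assoc, hc, hc, MonoidHom.id_apply, MonoidHom.id_apply, mul_smul, ht, hct,
    mul_one, hinv, one_mul]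

section Coprod

variable {N : Type*} [Group N] [MulAction (M ∗ N) Ω]

theorem ext_coprod {c c' : M ∗ N → Ω → T} (hc : IsCocycle (.id _) c)
    (hc' : IsCocycle (.id _) c') (hinl : ∀ m ω, c (inl m) ω = c' (inl m) ω)
    (hinr : ∀ n ω, c (inr n) ω = c' (inr n) ω) (g : M ∗ N) (ω : Ω) : c g ω = c' g ω := by
  induction g using Coprod.induction_on generalizing ω with
  | inl m => exact hinl m ω
  | inr n => exact hinr n ω
  | mul g h ihg ihh => rw [hc, hc', ihg, ihh]

variable {cM : M → Ω → T} {cN : N → Ω → T}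

/-- The cocycle on `M ∗ N` glued from a cocycle on `M` and a cocycle on `N`. -/
def coprodLift (hM : IsCocycle (inl : M →* M ∗ N) cM) (hN : IsCocycle (inr : N →* M ∗ N) cN)
    (g : M ∗ N) (ω : Ω) : T :=
  (lift hM.toSemidirectProduct hN.toSemidirectProduct g).left (g • ω)

variable (hM : IsCocycle (inl : M →* M ∗ N) cM) (hN : IsCocycle (inr : N →* M ∗ N) cN)

theorem coprodLift_inl (m : M) (ω : Ω) : hM.coprodLift hN (inl m) ω = cM m ω :=
  congrArg (cM m) (inv_smul_smul (inl m : M ∗ N) ω)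

theorem coprodLift_inr (n : N) (ω : Ω) : hM.coprodLift hN (inr n) ω = cN n ω :=
  congrArg (cN n) (inv_smul_smul (inr n : M ∗ N) ω)

theorem isCocycle_coprodLift : IsCocycle (.id _) (hM.coprodLift hN) := by
  intro g h ω
  let Φ := lift hM.toSemidirectProduct hN.toSemidirectProduct
  have right_Φ : (Φ g).right = g :=
    DFunLike.congr_fun (hom_ext rfl rfl : SemidirectProduct.rightHom.comp Φ = .id _) g
  change (Φ (g * h)).left ((g * h) • ω) = (Φ g).left (g • h • ω) * (Φ h).left (h • ω)
  rw [map_mul, SemidirectProduct.mul_left, right_Φ, Pi.mul_apply, mul_smul]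
  exact congrArg (_ * (Φ h).left ·) (inv_smul_smul g (h • ω))

end Coprod

end IsCocycle

end Cocycle

section Kurosh

variable {M N Ω : Type*} [Group M] [Group N] [MulAction (M ∗ N) Ω] {o : Ω} {t : Ω → M ∗ N}

/-- The orbit of `o` under the left factor of `M ∗ N`. -/
abbrev leftOrbit (M N : Type*) {Ω : Type*} [Group M] [Group N] [MulAction (M ∗ N) Ω] (o : Ω) :
    Set Ω :=
  MulAction.orbit (inl : M →* M ∗ N).range o

theorem inl_smul_mem_leftOrbit_iff {m : M} {ω : Ω} :
    (inl m : M ∗ N) • ω ∈ leftOrbit M N o ↔ ω ∈ leftOrbit M N o := by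
  have smul_mem (m : M) {ω : Ω} (hω : ω ∈ leftOrbit M N o) :
      (inl m : M ∗ N) • ω ∈ leftOrbit M N o :=
    MulAction.mapsTo_smul_orbit (⟨inl m, m, rfl⟩ : (inl : M →* M ∗ N).range) o hω
  refine ⟨fun hω => ?_, smul_mem m⟩
  simpa only [map_inv, inv_smul_smul] using smul_mem m⁻¹ hω

/-- A transversal `t` of the stabilizer of `o` in `M ∗ N` adapted to the left factor: the points
of `leftOrbit M N o` are represented by elements of `M`, and all other representatives are
obtained from these along a spanning forest. -/
structure IsLeftAdaptedTransversal (o : Ω) (t : Ω → M ∗ N) : Prop where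
  apply_base : t o = 1
  smul_base (ω : Ω) : t ω • o = ω
  mem_range_inl {ω : Ω} (hω : ω ∈ leftOrbit M N o) : t ω ∈ (inl : M →* M ∗ N).range
  reachable (ω : Ω) :
    SchreierReachable (Set.range inl ∪ Set.range inr) (leftOrbit M N o) t ω

theorem exists_isLeftAdaptedTransversal [MulAction.IsPretransitive (M ∗ N) Ω] (o : Ω) :
    ∃ t : Ω → M ∗ N, IsLeftAdaptedTransversal o t := by
  classical
  choose! m hm using fun ω (hω : ω ∈ leftOrbit M N o) => hω
  let t₀ : Ω → M ∗ N := Function.update (fun ω => m ω) o 1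
  have t₀_mem (ω : Ω) : t₀ ω ∈ (inl : M →* M ∗ N).range := by
    obtain rfl | hωo := eq_or_ne ω o
    · simp [t₀]
    · simp [t₀, hωo]
  have t₀_smul {ω : Ω} (hω : ω ∈ leftOrbit M N o) : t₀ ω • o = ω := by
    obtain rfl | hωo := eq_or_ne ω o
    · simp [t₀]
    · have t₀_eq : t₀ ω = m ω := Function.update_of_ne hωo _ _
      rw [t₀_eq]
      exact hm ω hω
  have ho : o ∈ leftOrbit M N o := MulAction.mem_orbit_self o
  obtain ⟨t, htt₀, hreach⟩ :=
    exists_schreierReachable mclosure_range_inl_union_inr ⟨o, ho⟩ t₀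
  refine ⟨t, by simp [htt₀ ho, t₀], fun ω => ?_, fun hω => htt₀ hω ▸ t₀_mem _, hreach⟩
  induction hreach ω with
  | base hω => rw [htt₀ hω, t₀_smul hω]
  | step _ _ _ ht ih => rw [ht, mul_smul, ih]

/-- The elements of the left factor of `M ∗ N` that fix `o`. -/
abbrev leftStabilizer (M N : Type*) {Ω : Type*} [Group M] [Group N] [MulAction (M ∗ N) Ω]
    (o : Ω) : Subgroup (M ∗ N) :=
  (inl : M →* M ∗ N).range ⊓ MulAction.stabilizer (M ∗ N) o

/-- The complement of `leftStabilizer M N o` in the stabilizer of `o`: the subgroup generated by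
the Schreier loops of all edges except the `M`-edges inside `leftOrbit M N o`. -/
def loopComplement (o : Ω) (t : Ω → M ∗ N) : Subgroup (M ∗ N) :=
  Subgroup.closure
    ({g | ∃ m, ∃ ω ∉ leftOrbit M N o, schreierLoop t (inl m) ω = g} ∪
      {g | ∃ n ω, schreierLoop t (inr n) ω = g})

theorem schreierLoop_inl_mem_loopComplement (t : Ω → M ∗ N) (m : M) {ω : Ω}
    (hω : ω ∉ leftOrbit M N o) : schreierLoop t (inl m) ω ∈ loopComplement o t :=
  Subgroup.subset_closure (.inl ⟨m, ω, hω, rfl⟩)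

theorem schreierLoop_inr_mem_loopComplement (o : Ω) (t : Ω → M ∗ N) (n : N) (ω : Ω) :
    schreierLoop t (inr n) ω ∈ loopComplement o t :=
  Subgroup.subset_closure (.inr ⟨n, ω, rfl⟩)

namespace IsLeftAdaptedTransversal

theorem schreierLoop_inl_mem_leftStabilizer (ht : IsLeftAdaptedTransversal o t) (m : M) {ω : Ω}
    (hω : ω ∈ leftOrbit M N o) : schreierLoop t (inl m) ω ∈ leftStabilizer M N o := by
  have hmω : t (inl m • ω) ∈ (inl : M →* M ∗ N).range :=
    ht.mem_range_inl (inl_smul_mem_leftOrbit_iff.2 hω)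
  have hm : inl m ∈ (inl : M →* M ∗ N).range := ⟨m, rfl⟩
  exact Subgroup.mem_inf.2 ⟨mul_mem (mul_mem (inv_mem hmω) hm) (ht.mem_range_inl hω),
    schreierLoop_mem_stabilizer ht.smul_base _ _⟩

theorem loopComplement_le_stabilizer (ht : IsLeftAdaptedTransversal o t) :
    loopComplement o t ≤ MulAction.stabilizer (M ∗ N) o := by
  rw [loopComplement, Subgroup.closure_le]
  rintro _ (⟨m, ω, -, rfl⟩ | ⟨n, ω, rfl⟩) <;> exact schreierLoop_mem_stabilizer ht.smul_base _ _

open scoped Classical in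
/-- The Schreier loops of the `M`-edges, placed in the free factor of
`leftStabilizer M N o ∗ loopComplement o t` to which they belong. -/
noncomputable def leftLoopCocycle (ht : IsLeftAdaptedTransversal o t) (m : M) (ω : Ω) :
    leftStabilizer M N o ∗ loopComplement o t :=
  if hω : ω ∈ leftOrbit M N o then
    inl ⟨schreierLoop t (inl m) ω, ht.schreierLoop_inl_mem_leftStabilizer m hω⟩
  else inr ⟨schreierLoop t (inl m) ω, schreierLoop_inl_mem_loopComplement t m hω⟩

/-- The Schreier loops of the `N`-edges, as elements of the right factor of
`leftStabilizer M N o ∗ loopComplement o t`. -/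
def rightLoopCocycle (o : Ω) (t : Ω → M ∗ N) (n : N) (ω : Ω) :
    leftStabilizer M N o ∗ loopComplement o t :=
  inr ⟨schreierLoop t (inr n) ω, schreierLoop_inr_mem_loopComplement o t n ω⟩

theorem isCocycle_leftLoopCocycle (ht : IsLeftAdaptedTransversal o t) :
    IsCocycle (inl : M →* M ∗ N) ht.leftLoopCocycle := by
  intro g h ω
  have loop_mul := isCocycle_schreierLoop (inl : M →* M ∗ N) t g h ω
  by_cases hω : ω ∈ leftOrbit M N o
  · have hhω := (inl_smul_mem_leftOrbit_iff (m := h)).2 hω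
    simp only [leftLoopCocycle, dif_pos hω, dif_pos hhω, ← map_mul]
    exact congrArg inl (Subtype.ext loop_mul)
  · have hhω := (inl_smul_mem_leftOrbit_iff (m := h)).not.2 hω
    simp only [leftLoopCocycle, dif_neg hω, dif_neg hhω, ← map_mul]
    exact congrArg inr (Subtype.ext loop_mul)

theorem isCocycle_rightLoopCocycle (o : Ω) (t : Ω → M ∗ N) :
    IsCocycle (inr : N →* M ∗ N) (rightLoopCocycle o t) := by
  intro g h ω
  simp only [rightLoopCocycle, ← map_mul]
  exact congrArg inr (Subtype.ext (isCocycle_schreierLoop (inr : N →* M ∗ N) t g h ω))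

/-- The cocycle whose restriction to the stabilizer of `o` inverts the canonical map from
`leftStabilizer M N o ∗ loopComplement o t`. -/
noncomputable def loopCocycle (ht : IsLeftAdaptedTransversal o t) :
    M ∗ N → Ω → leftStabilizer M N o ∗ loopComplement o t :=
  ht.isCocycle_leftLoopCocycle.coprodLift (isCocycle_rightLoopCocycle o t)

theorem isCocycle_loopCocycle (ht : IsLeftAdaptedTransversal o t) :
    IsCocycle (.id _) ht.loopCocycle :=
  IsCocycle.isCocycle_coprodLift _ _

theorem loopCocycle_inl_of_mem (ht : IsLeftAdaptedTransversal o t) (m : M) {ω : Ω}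
    (hω : ω ∈ leftOrbit M N o) :
    ht.loopCocycle (inl m) ω =
      inl ⟨schreierLoop t (inl m) ω, ht.schreierLoop_inl_mem_leftStabilizer m hω⟩ := by
  rw [loopCocycle, IsCocycle.coprodLift_inl, leftLoopCocycle, dif_pos hω]

theorem loopCocycle_inl_of_notMem (ht : IsLeftAdaptedTransversal o t) (m : M) {ω : Ω}
    (hω : ω ∉ leftOrbit M N o) :
    ht.loopCocycle (inl m) ω =
      inr ⟨schreierLoop t (inl m) ω, schreierLoop_inl_mem_loopComplement t m hω⟩ := by
  rw [loopCocycle, IsCocycle.coprodLift_inl, leftLoopCocycle, dif_neg hω]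

theorem loopCocycle_inr (ht : IsLeftAdaptedTransversal o t) (n : N) (ω : Ω) :
    ht.loopCocycle (inr n) ω =
      inr ⟨schreierLoop t (inr n) ω, schreierLoop_inr_mem_loopComplement o t n ω⟩ := by
  rw [loopCocycle, IsCocycle.coprodLift_inr, rightLoopCocycle]

theorem lift_subtype_loopCocycle (ht : IsLeftAdaptedTransversal o t) (g : M ∗ N) (ω : Ω) :
    lift (leftStabilizer M N o).subtype (loopComplement o t).subtype (ht.loopCocycle g ω) =
      schreierLoop t g ω := by
  refine IsCocycle.ext_coprod (ht.isCocycle_loopCocycle.map_comp _)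
    (isCocycle_schreierLoop (.id _) t) (fun m ω => ?_) (fun n ω => ?_) g ω
  · by_cases hω : ω ∈ leftOrbit M N o
    · rw [ht.loopCocycle_inl_of_mem m hω]; rfl
    · rw [ht.loopCocycle_inl_of_notMem m hω]; rfl
  · rw [ht.loopCocycle_inr]; rfl

theorem leftStabilizer_sup_loopComplement (ht : IsLeftAdaptedTransversal o t) :
    leftStabilizer M N o ⊔ loopComplement o t = MulAction.stabilizer (M ∗ N) o := by
  refine le_antisymm (sup_le inf_le_right ht.loopComplement_le_stabilizer) fun g hg => ?_
  have hg_eq := ht.lift_subtype_loopCocycle g o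
  rw [schreierLoop_of_mem_stabilizer ht.apply_base hg] at hg_eq
  have hg_range := MonoidHom.mem_range.2 ⟨_, hg_eq⟩
  rwa [range_lift_subtype] at hg_range

theorem loopCocycle_of_mem_leftStabilizer (ht : IsLeftAdaptedTransversal o t)
    (g : leftStabilizer M N o) : ht.loopCocycle g o = inl g := by
  obtain ⟨_, ⟨m, rfl⟩, hm⟩ := g
  rw [ht.loopCocycle_inl_of_mem m (MulAction.mem_orbit_self o)]
  exact congrArg inl (Subtype.ext (schreierLoop_of_mem_stabilizer ht.apply_base hm))

-- Every edge of the spanning forest has trivial loop, so the cocycle is trivial along `t ω`.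
theorem loopCocycle_transversal (ht : IsLeftAdaptedTransversal o t) (ω : Ω) :
    ht.loopCocycle (t ω) o = 1 := by
  induction ht.reachable ω with
  | @base ω hω =>
    obtain ⟨m, hm⟩ := ht.mem_range_inl hω
    have hloop : schreierLoop t (inl m) o = 1 :=
      schreierLoop_eq_one (by rw [hm, ht.smul_base, ht.apply_base, mul_one])
    rw [← hm, ht.loopCocycle_inl_of_mem m (MulAction.mem_orbit_self o)]
    exact (congrArg inl (Subtype.ext hloop)).trans (map_one _)
  | @step u p hu _ hup htu ih =>
    have hloop : schreierLoop t u p = 1 := schreierLoop_eq_one htu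
    rw [htu, ht.isCocycle_loopCocycle, ih, mul_one, MonoidHom.id_apply, ht.smul_base]
    obtain ⟨m, rfl⟩ | ⟨n, rfl⟩ := hu
    · rw [ht.loopCocycle_inl_of_notMem m (inl_smul_mem_leftOrbit_iff.not.1 hup)]
      exact (congrArg inr (Subtype.ext hloop)).trans (map_one _)
    · rw [ht.loopCocycle_inr]
      exact (congrArg inr (Subtype.ext hloop)).trans (map_one _)

theorem loopCocycle_of_mem_loopComplement (ht : IsLeftAdaptedTransversal o t)
    (g : loopComplement o t) : ht.loopCocycle g o = inr g := by
  let r := (ht.isCocycle_loopCocycle.stabilizerHom o).comp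
    (Subgroup.inclusion ht.loopComplement_le_stabilizer)
  suffices r = inr from DFunLike.congr_fun this g
  refine MonoidHom.eq_of_eqOn_dense Subgroup.closure_closure_coe_preimage ?_
  rintro ⟨_, _⟩ (⟨m, ω, hω, rfl⟩ | ⟨n, ω, rfl⟩)
  · exact (ht.isCocycle_loopCocycle.apply_schreierLoop ht.smul_base ht.loopCocycle_transversal
      _ _).trans (ht.loopCocycle_inl_of_notMem m hω)
  · exact (ht.isCocycle_loopCocycle.apply_schreierLoop ht.smul_base ht.loopCocycle_transversal
      _ _).trans (ht.loopCocycle_inr n ω)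

theorem isFreeFactor_leftStabilizer (ht : IsLeftAdaptedTransversal o t) :
    IsFreeFactor (leftStabilizer M N o) (MulAction.stabilizer (M ∗ N) o) := by
  rw [← ht.leftStabilizer_sup_loopComplement]
  refine isFreeFactor_sup_of_retraction
    ((ht.isCocycle_loopCocycle.stabilizerHom o).comp
      (Subgroup.inclusion ht.leftStabilizer_sup_loopComplement.le))
    (MonoidHom.ext ht.loopCocycle_of_mem_leftStabilizer)
    (MonoidHom.ext ht.loopCocycle_of_mem_loopComplement)

end IsLeftAdaptedTransversal

theorem isFreeFactor_range_inl_inf (B : Subgroup (M ∗ N)) :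
    IsFreeFactor ((inl : M →* M ∗ N).range ⊓ B) B := by
  obtain ⟨t, ht⟩ := exists_isLeftAdaptedTransversal (M := M) (N := N) ((1 : M ∗ N) : (M ∗ N) ⧸ B)
  simpa only [leftStabilizer, MulAction.stabilizer_quotient] using ht.isFreeFactor_leftStabilizer

theorem IsFreeFactor.inf_of_le {G : Type*} [Group G] {H K B : Subgroup G}
    (hHK : IsFreeFactor H K) (hBK : B ≤ K) : IsFreeFactor (H ⊓ B) B := by
  obtain ⟨L, hinj, rfl⟩ := isFreeFactor_iff_exists_injective_lift_subtype.1 hHK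
  have hmap := (isFreeFactor_range_inl_inf (B.comap (lift H.subtype L.subtype))).map hinj
  rwa [Subgroup.map_inf _ _ _ hinj, ← MonoidHom.range_comp, lift_comp_inl, Subgroup.map_comap_eq,
    range_lift_subtype, Subgroup.range_subtype, inf_eq_right.2 hBK] at hmap

end Kurosh

section Existence

variable {G T : Type*} [Group G] [Group T] {H K L : Subgroup G}

theorem exists_finite_subset_le_closure {s : Set G} (hH : H.FG) (hs : H ≤ Subgroup.closure s) :
    ∃ t ⊆ s, t.Finite ∧ H ≤ Subgroup.closure t := by
  have exists_support {g : G} (hg : g ∈ Subgroup.closure s) :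
      ∃ t ⊆ s, t.Finite ∧ g ∈ Subgroup.closure t := by
    induction hg using Subgroup.closure_induction with
    | mem g hg =>
      exact ⟨{g}, Set.singleton_subset_iff.2 hg, Set.finite_singleton g,
        Subgroup.mem_closure_singleton_self g⟩
    | one => exact ⟨∅, Set.empty_subset s, Set.finite_empty, one_mem _⟩
    | mul g h _ _ ihg ihh =>
      obtain ⟨t, hts, ht, hgt⟩ := ihg
      obtain ⟨t', ht's, ht', hht'⟩ := ihh
      exact ⟨t ∪ t', Set.union_subset hts ht's, ht.union ht',
        mul_mem (Subgroup.closure_mono Set.subset_union_left hgt)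
          (Subgroup.closure_mono Set.subset_union_right hht')⟩
    | inv g _ ih =>
      obtain ⟨t, hts, ht, hgt⟩ := ih
      exact ⟨t, hts, ht, inv_mem hgt⟩
  obtain ⟨F, rfl⟩ := hH
  choose! t hts ht hmem using fun g (hg : g ∈ F) => exists_support (hs (Subgroup.subset_closure hg))
  refine ⟨⋃ g ∈ F, t g, Set.iUnion₂_subset hts, F.finite_toSet.biUnion ht, ?_⟩
  rw [Subgroup.closure_le]
  exact fun g hg => Subgroup.closure_mono (Set.subset_biUnion_of_mem hg) (hmem g hg)

theorem closure_range_freeGroupBasis {ι : Type*} (b : FreeGroupBasis ι G) :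
    Subgroup.closure (Set.range b) = ⊤ := by
  have hmap := congrArg (Subgroup.map b.repr.symm.toMonoidHom) (FreeGroup.closure_range_of ι)
  rwa [MonoidHom.map_closure, ← Set.range_comp, ← MonoidHom.range_eq_map,
    MonoidHom.range_eq_top.2 b.repr.symm.surjective] at hmap

theorem isFreeFactor_closure_image_freeGroupBasis {ι : Type*} (b : FreeGroupBasis ι G)
    (S : Set ι) : IsFreeFactor (Subgroup.closure (b '' S)) ⊤ := by
  classical
  have mem_image {S : Set ι} {i : ι} (hi : i ∈ S) : b i ∈ Subgroup.closure (b '' S) :=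
    Subgroup.subset_closure (Set.mem_image_of_mem b hi)
  let r : G →* Subgroup.closure (b '' S) ∗ Subgroup.closure (b '' Sᶜ) := b.lift fun i =>
    if hi : i ∈ S then inl ⟨b i, mem_image hi⟩ else inr ⟨b i, mem_image hi⟩
  have r_of_mem {i : ι} (hi : i ∈ S) : r (b i) = inl ⟨b i, mem_image hi⟩ := by
    simp [r, hi]
  have r_of_notMem {i : ι} (hi : i ∈ Sᶜ) : r (b i) = inr ⟨b i, mem_image hi⟩ := by
    simp [r, show i ∉ S from hi]
  have sup_eq_top : Subgroup.closure (b '' S) ⊔ Subgroup.closure (b '' Sᶜ) = ⊤ := by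
    rw [← Subgroup.closure_union, ← Set.image_union, Set.union_compl_self, Set.image_univ,
      closure_range_freeGroupBasis]
  rw [← sup_eq_top]
  refine isFreeFactor_sup_of_retraction (r.comp (Subgroup.subtype _))
    (MonoidHom.eq_of_eqOn_dense Subgroup.closure_closure_coe_preimage ?_)
    (MonoidHom.eq_of_eqOn_dense Subgroup.closure_closure_coe_preimage ?_)
  · rintro ⟨_, _⟩ ⟨i, hi, rfl⟩
    exact r_of_mem hi
  · rintro ⟨_, _⟩ ⟨i, hi, rfl⟩
    exact r_of_notMem hi

theorem exists_fg_isFreeFactor_top [IsFreeGroup G] (hH : H.FG) :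
    ∃ L : Subgroup G, H ≤ L ∧ L.FG ∧ IsFreeFactor L ⊤ := by
  let b := IsFreeGroup.basis G
  obtain ⟨_, hS, hfin, hle⟩ := exists_finite_subset_le_closure hH
    (le_top.trans (closure_range_freeGroupBasis b).ge)
  obtain ⟨S, rfl⟩ := Set.subset_range_iff_exists_image_eq.1 hS
  exact ⟨_, hle, (Subgroup.fg_iff _).2 ⟨_, rfl, hfin⟩,
    isFreeFactor_closure_image_freeGroupBasis b S⟩

theorem exists_fg_isFreeFactor_of_le [IsFreeGroup K] (hH : H.FG) (hHK : H ≤ K) :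
    ∃ L : Subgroup G, H ≤ L ∧ L.FG ∧ IsFreeFactor L K := by
  have hH' : (H.subgroupOf K).FG := by
    have := (Group.fg_iff_subgroup_fg H).2 hH
    exact (Group.fg_iff_subgroup_fg _).1
      (Group.fg_of_surjective (f := (Subgroup.subgroupOfEquivOfLe hHK).symm.toMonoidHom)
        (Subgroup.subgroupOfEquivOfLe hHK).symm.surjective)
  obtain ⟨L, hHL, hL, hLK⟩ := exists_fg_isFreeFactor_top hH'
  refine ⟨L.map K.subtype, ?_, ?_, ?_⟩
  · rw [← Subgroup.map_subgroupOf_eq_of_le hHK]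
    exact Subgroup.map_mono hHL
  · rw [Subgroup.fg_iff_submonoid_fg] at hL ⊢
    exact hL.map K.subtype
  · simpa only [← MonoidHom.range_eq_map, Subgroup.range_subtype] using
      hLK.map K.subtype_injective

theorem finite_monoidHom_of_fg (M N : Type*) [Monoid M] [Monoid N] [Monoid.FG M] [Finite N] :
    Finite (M →* N) := by
  obtain ⟨s, hs, hfin⟩ := Monoid.fg_iff.1 ‹Monoid.FG M›
  have := hfin.to_subtype
  exact Finite.of_injective (fun f (g : s) => f g) fun f f' h =>
    MonoidHom.eq_of_eqOn_denseM hs fun g hg => congrFun h ⟨g, hg⟩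

theorem card_monoidHom_coprod (M N P : Type*) [Monoid M] [Monoid N] [Monoid P] :
    Nat.card (M ∗ N →* P) = Nat.card (M →* P) * Nat.card (N →* P) := by
  rw [← Nat.card_prod, Nat.card_congr liftEquiv]

theorem one_lt_card_monoidHom [Nontrivial T] [Nontrivial G] [IsFreeGroup G] [Finite (G →* T)] :
    1 < Nat.card (G →* T) := by
  obtain ⟨i⟩ : Nonempty (IsFreeGroup.Generators G) := by
    by_contra h
    rw [not_nonempty_iff] at h
    exact not_subsingleton G (IsFreeGroup.mulEquiv G).symm.toEquiv.subsingleton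
  obtain ⟨x, hx⟩ := exists_ne (1 : T)
  refine (Finite.one_lt_card_iff_nontrivial).2 ⟨IsFreeGroup.lift fun _ => x, 1, fun h => hx ?_⟩
  simpa only [IsFreeGroup.lift_of, MonoidHom.one_apply] using
    DFunLike.congr_fun h (IsFreeGroup.of i)

theorem isFreeGroup_of_le [IsFreeGroup K] (h : L ≤ K) : IsFreeGroup L :=
  .ofMulEquiv (Subgroup.subgroupOfEquivOfLe h)

namespace IsFreeFactor

theorem fg (h : IsFreeFactor H K) (hK : K.FG) : H.FG := by
  obtain ⟨L, hinj, rfl⟩ := isFreeFactor_iff_exists_injective_lift_subtype.1 h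
  have := (Group.fg_iff_subgroup_fg _).2 hK
  let e := (coprodEquivSup hinj).symm
  exact (Group.fg_iff_subgroup_fg H).1
    (Group.fg_of_surjective (f := fst.comp e.toMonoidHom) (fst_surjective.comp e.surjective))

theorem card_monoidHom_lt [IsFreeGroup K] [Finite T] [Nontrivial T] (h : IsFreeFactor H K)
    (hK : K.FG) (hne : H ≠ K) : Nat.card (H →* T) < Nat.card (K →* T) := by
  obtain ⟨L, hinj, rfl⟩ := isFreeFactor_iff_exists_injective_lift_subtype.1 h
  have := (Group.fg_iff_subgroup_fg _).2 hK
  have card_eq : Nat.card (↥(H ⊔ L) →* T) = Nat.card (H →* T) * Nat.card (L →* T) := by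
    rw [← card_monoidHom_coprod, Nat.card_congr (coprodEquivSup hinj).monoidHomCongrLeftEquiv]
  have : Finite (↥(H ⊔ L) →* T) := finite_monoidHom_of_fg _ T
  have card_pos : 0 < Nat.card (H →* T) * Nat.card (L →* T) := card_eq ▸ Nat.card_pos
  have : Finite (L →* T) := Nat.finite_of_card_ne_zero (Nat.pos_of_mul_pos_left card_pos).ne'
  have : Nontrivial L := (Subgroup.nontrivial_iff_ne_bot L).2 fun hL => hne (by rw [hL, sup_bot_eq])
  have := isFreeGroup_of_le (le_sup_right : L ≤ H ⊔ L)
  rw [card_eq]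
  exact lt_mul_of_one_lt_right (Nat.pos_of_mul_pos_right card_pos) one_lt_card_monoidHom

end IsFreeFactor

theorem exists_isAlgebraicExtension_isFreeFactor [IsFreeGroup K] (hH : H.FG) (hHK : H ≤ K) :
    ∃ L : Subgroup G, IsAlgebraicExtension H L ∧ IsFreeFactor L K := by
  let s := {L : Subgroup G | H ≤ L ∧ L.FG ∧ IsFreeFactor L K}
  -- For `L` free of rank `n`, `homCard L = 2 ^ n`.
  let homCard (L : Subgroup G) := Nat.card (L →* Multiplicative (ZMod 2))
  obtain ⟨L, ⟨hHL, hL, hLK⟩, hmin⟩ :=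
    (measure homCard).wf.has_min s (exists_fg_isFreeFactor_of_le hH hHK)
  have := isFreeGroup_of_le hLK.le
  refine ⟨L, ⟨hHL, fun P hHP hPL => ?_⟩, hLK⟩
  by_contra hne
  exact hmin P ⟨hHP, hPL.fg hL, hPL.trans hLK⟩ (hPL.card_monoidHom_lt hL hne)

end Existence

theorem IsAlgebraicExtension.le_of_isFreeFactor {G : Type*} [Group G] {H K P Q : Subgroup G}
    (hQ : IsAlgebraicExtension H Q) (hQK : Q ≤ K) (hHP : H ≤ P) (hPK : IsFreeFactor P K) :
    Q ≤ P :=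
  inf_eq_right.1 (hQ.2 _ (le_inf hHP hQ.1) (hPK.inf_of_le hQK))

theorem takahasi_algebraic_closure_general {G : Type*} [Group G] (H K : Subgroup G)
    [IsFreeGroup K] (hH : H.FG) (hHK : H ≤ K) :
    ∃! H' : Subgroup G, IsAlgebraicExtension H H' ∧ IsFreeFactor H' K := by
  obtain ⟨L, hHL, hLK⟩ := exists_isAlgebraicExtension_isFreeFactor hH hHK
  refine ⟨L, ⟨hHL, hLK⟩, fun Q ⟨hHQ, hQK⟩ => le_antisymm ?_ ?_⟩
  · exact hHQ.le_of_isFreeFactor hQK.le hHL.1 hLK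
  · exact hHL.le_of_isFreeFactor hLK.le hHQ.1 hQK

/-- **Takahasi's theorem** (algebraic closure form): for a finitely generated
subgroup `H` of a free group and any subgroup `K` containing `H`, there is a unique
subgroup `H'` with `H ≤alg H'` and `H'` a free factor of `K`. -/
theorem takahasi_algebraic_closure {A : Type*} (H K : Subgroup (FreeGroup A))
    (hH : H.FG) (hHK : H ≤ K) :
    ∃! H' : Subgroup (FreeGroup A),
      IsAlgebraicExtension H H' ∧ IsFreeFactor H' K :=
  takahasi_algebraic_closure_general H K hH hHK
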